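/- Let N ≥ 1, 0 < s < 1, and let q satisfy 1 < q < 1*_s = N/(N−s). Then S_{s,q}(ℝ^N) ≤ (s/N) · (1/q − 1/1*_s)^{(N/s)(1/1*_s − 1/q)} · (1 − 1/q)^{(N/s)(1/q − 1)} · 𝒮_{s,1*}^{(N/s)(1 − 1/q)}. -/

import Mathlib

open MeasureTheory Real
open scoped ENNReal

noncomputable section

/-- Euclidean space `ℝ^N`. -/
abbrev Rn (N : ℕ) := EuclideanSpace ℝ (Fin N)

/-- The Gagliardo `W^{s,1}` seminorm `[u]_{s,1}`, as an extended nonnegative real. -/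
def gagE (N : ℕ) (s : ℝ) (u : Rn N → ℝ) : ℝ≥0∞ :=
  ∫⁻ x, ∫⁻ y, ENNReal.ofReal (|u x - u y| / dist x y ^ ((N : ℝ) + s))

/-- Membership in `W^{s,1}(ℝ^N)`: integrable with finite Gagliardo seminorm. -/
def memW (N : ℕ) (s : ℝ) (u : Rn N → ℝ) : Prop :=
  Integrable u volume ∧ gagE N s u < ⊤

/-- Real-valued Gagliardo seminorm. -/
def gag (N : ℕ) (s : ℝ) (u : Rn N → ℝ) : ℝ := (gagE N s u).toReal

/-- The `L^q(ℝ^N)` norm. -/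
def Lq (N : ℕ) (q : ℝ) (u : Rn N → ℝ) : ℝ := (∫ x, |u x| ^ q) ^ (1 / q)

/-- `u` is nonzero as an element of a Lebesgue-type space. -/
def nontriv (N : ℕ) (u : Rn N → ℝ) : Prop := ¬ u =ᵐ[(volume : Measure (Rn N))] 0

/-- The best constant `S_{s,q}(Ω)` of the embedding `W^{s,1}_0(Ω) ↪ L^q(Ω)`. -/
def SDom (N : ℕ) (s q : ℝ) (Ω : Set (Rn N)) : ℝ :=
  sInf { r : ℝ | ∃ u : Rn N → ℝ, memW N s u ∧
      (∀ᵐ x ∂(volume : Measure (Rn N)), x ∉ Ω → u x = 0) ∧ nontriv N u ∧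
      r = gag N s u / Lq N q u }

/-- The critical constant `𝒮_{s,1*}`. -/
def Scrit (N : ℕ) (s : ℝ) : ℝ :=
  sInf { r : ℝ | ∃ u : Rn N → ℝ, memW N s u ∧ nontriv N u ∧
      r = gag N s u / Lq N ((N : ℝ) / ((N : ℝ) - s)) u }

/-- The best constant `S_{s,q}(ℝ^N)` of the embedding `W^{s,1}(ℝ^N) ↪ L^q(ℝ^N)`. -/
def SFull (N : ℕ) (s q : ℝ) : ℝ :=
  sInf { r : ℝ | ∃ u : Rn N → ℝ, memW N s u ∧ nontriv N u ∧
      r = (gag N s u + ∫ x, |u x|) / Lq N q u }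

lemma coarea_pt (a b : ℝ) (ha : 0 ≤ a) (hb : 0 ≤ b) :
    ENNReal.ofReal |a - b| = ∫⁻ t in Set.Ioi (0:ℝ),
      ENNReal.ofReal |(if t < a then (1:ℝ) else 0) - (if t < b then (1:ℝ) else 0)| := by
  wlog hab : a ≤ b generalizing a b with H
  · rw [abs_sub_comm, H b a hb ha (by linarith)]
    refine lintegral_congr fun t => ?_
    rw [abs_sub_comm]
  have h : ∀ t : ℝ, ENNReal.ofReal |(if t < a then (1:ℝ) else 0) - (if t < b then (1:ℝ) else 0)|
      = (Set.Ico a b).indicator (fun _ => (1:ℝ≥0∞)) t := by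
    intro t
    by_cases h1 : t < a
    · have h2 : t < b := by linarith
      simp [h1, h2]
    · by_cases h2 : t < b
      · simp [h1, h2, not_lt.mp h1]
      · simp [h1, h2]
  simp_rw [h]
  rw [lintegral_indicator measurableSet_Ico, Measure.restrict_restrict measurableSet_Ico,
    setLIntegral_one, abs_sub_comm, abs_of_nonneg (by linarith : 0 ≤ b - a)]
  apply le_antisymm
  · rw [← Real.volume_Ioo]
    apply measure_mono
    intro x hx
    exact ⟨⟨hx.1.le, hx.2⟩, lt_of_le_of_lt ha hx.1⟩
  · rw [← Real.volume_Ico]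
    exact measure_mono Set.inter_subset_left

lemma layer_pt (a : ℝ) (ha : 0 ≤ a) :
    ENNReal.ofReal a = ∫⁻ t in Set.Ioi (0:ℝ), (if t < a then (1:ℝ≥0∞) else 0) := by
  have := coarea_pt a 0 ha le_rfl
  rw [sub_zero, abs_of_nonneg ha] at this
  rw [this]
  refine setLIntegral_congr_fun measurableSet_Ioi fun t ht => ?_
  have : ¬ t < 0 := not_lt.mpr (le_of_lt ht)
  by_cases h : t < a <;> simp [h, this]

lemma mink {α : Type*} [MeasurableSpace α] (μ : Measure α) [SFinite μ] (v : α → ℝ) (hv : Measurable v)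
    (h0 : ∀ x, 0 ≤ v x) (hi : ∫⁻ x, ENNReal.ofReal (v x) ∂μ < ⊤) (p : ℝ) (hp : 1 < p) :
    ∫⁻ x, ENNReal.ofReal (v x) ^ p ∂μ ≤
      (∫⁻ t in Set.Ioi (0:ℝ), (μ {x | t < v x}) ^ (1 / p)) ^ p := by
  have hp0 : 0 < p := by linarith
  set A := ∫⁻ t in Set.Ioi (0:ℝ), (μ {x | t < v x}) ^ (1 / p) with hA
  set V : α → ℝ≥0∞ := fun x => ENNReal.ofReal (v x) with hV
  have hVm : Measurable V := hv.ennreal_ofReal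
  set w : ℕ → α → ℝ≥0∞ := fun k x => min (V x) k with hw
  have hwm : ∀ k, Measurable (w k) := fun k => hVm.min measurable_const
  have hpow : ∀ (k : ℕ) x, w k x ^ p = w k x * w k x ^ (p - 1) := by
    intro k x
    have := ENNReal.rpow_add_of_nonneg (x := w k x) 1 (p - 1) (by norm_num) (by linarith)
    rwa [ENNReal.rpow_one, add_sub_cancel] at this
  have key : ∀ k : ℕ, ∫⁻ x, w k x ^ p ∂μ ≤ A ^ p := by
    intro k
    set I := ∫⁻ x, w k x ^ p ∂μ with hI
    have hIfin : I ≠ ⊤ := by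
      have : I ≤ ∫⁻ x, V x * (k:ℝ≥0∞) ^ (p-1) ∂μ := by
        refine lintegral_mono fun x => ?_
        simp only [hpow]
        refine mul_le_mul' (min_le_left _ _) (ENNReal.rpow_le_rpow (min_le_right _ _) (by linarith))
      refine ne_top_of_le_ne_top ?_ this
      rw [lintegral_mul_const _ hVm]
      exact ENNReal.mul_ne_top hi.ne (ENNReal.rpow_ne_top_of_nonneg (by linarith) (by simp))
    have hq : p.HolderConjugate p.conjExponent := Real.HolderConjugate.conjExponent hp
    have hmeas : Measurable (fun z : α × ℝ =>
        (if z.2 < v z.1 then (1:ℝ≥0∞) else 0) * w k z.1 ^ (p-1)) := by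
      refine Measurable.mul ?_ (((hwm k).comp measurable_fst).pow_const _)
      exact Measurable.ite (measurableSet_lt measurable_snd (hv.comp measurable_fst))
        measurable_const measurable_const
    have h1 : I ≤ A * I ^ (1 / p.conjExponent) := by
      calc I ≤ ∫⁻ x, V x * w k x ^ (p-1) ∂μ := by
            refine lintegral_mono fun x => ?_
            simp only [hpow]
            exact mul_le_mul' (min_le_left _ _) le_rfl
        _ = ∫⁻ x, (∫⁻ t in Set.Ioi (0:ℝ), (if t < v x then (1:ℝ≥0∞) else 0) * w k x ^ (p-1)) ∂μ := by
            refine lintegral_congr fun x => ?_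
            rw [lintegral_mul_const' _ _ (ENNReal.rpow_ne_top_of_nonneg (by linarith)
              (ne_top_of_le_ne_top (ENNReal.natCast_ne_top k) (min_le_right _ _)))]
            congr 1
            exact layer_pt _ (h0 x)
        _ = ∫⁻ t in Set.Ioi (0:ℝ), ∫⁻ x, (if t < v x then (1:ℝ≥0∞) else 0) * w k x ^ (p-1) ∂μ := by
            rw [lintegral_lintegral_swap]
            exact hmeas.aemeasurable
        _ ≤ ∫⁻ t in Set.Ioi (0:ℝ), (μ {x | t < v x}) ^ (1 / p) * I ^ (1 / p.conjExponent) := by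
            refine lintegral_mono fun t => ?_
            have hs : MeasurableSet {x | t < v x} := measurableSet_lt measurable_const hv
            have := ENNReal.lintegral_mul_le_Lp_mul_Lq μ hq
              (f := fun x => (if t < v x then (1:ℝ≥0∞) else 0)) (g := fun x => w k x ^ (p-1))
              (Measurable.ite hs measurable_const measurable_const).aemeasurable
              ((hwm k).pow_const _).aemeasurable
            refine this.trans (le_of_eq ?_)
            congr 2
            · rw [← lintegral_indicator_one hs]
              refine lintegral_congr fun x => ?_
              by_cases h : t < v x <;> simp [h, hp0]
            · rw [hI]
              refine lintegral_congr fun x => ?_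
              rw [← ENNReal.rpow_mul]
              congr 1
              rw [Real.conjExponent]
              field_simp [(by linarith : p - 1 ≠ 0)]
              
        _ = _ := by
            rw [lintegral_mul_const']
            exact ENNReal.rpow_ne_top_of_nonneg (by have := hq.symm.pos; positivity) hIfin
    by_cases hI0 : I = 0
    · rw [hI0]; exact zero_le
    have h2 : I ^ (1/p) ≤ A := by
      have e : I = I ^ (1/p) * I ^ (1 / p.conjExponent) := by
        rw [← ENNReal.rpow_add _ _ hI0 hIfin, one_div, one_div, hq.inv_add_inv_eq_one, ENNReal.rpow_one]
      have hne : I ^ (1 / p.conjExponent) ≠ 0 := by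
        simp [ENNReal.rpow_eq_zero_iff, hI0, hIfin]
      have hnt : I ^ (1 / p.conjExponent) ≠ ⊤ := 
        ENNReal.rpow_ne_top_of_nonneg (by have := hq.symm.pos; positivity) hIfin
      exact (ENNReal.mul_le_mul_iff_left hne hnt).mp (by rw [← e]; exact h1)
    calc I = (I ^ (1/p)) ^ p := by rw [← ENNReal.rpow_mul, one_div_mul_cancel hp0.ne', ENNReal.rpow_one]
      _ ≤ _ := ENNReal.rpow_le_rpow h2 hp0.le
  have hmono : Monotone (fun k x => w k x ^ p) := by
    intro i j hij x
    refine ENNReal.rpow_le_rpow (min_le_min le_rfl ?_) hp0.le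
    exact_mod_cast hij
  have : ∀ x, V x ^ p = ⨆ k, w k x ^ p := by
    intro x
    apply le_antisymm
    · obtain ⟨n, hn⟩ := exists_nat_ge (v x)
      refine le_trans (le_of_eq ?_) (le_iSup _ n)
      simp only [hw]
      rw [min_eq_left]
      exact ENNReal.ofReal_le_of_le_toReal (by simpa using hn)
    · exact iSup_le fun k => ENNReal.rpow_le_rpow (min_le_left _ _) hp0.le
  rw [show (∫⁻ x, V x ^ p ∂μ) = ∫⁻ x, ⨆ k, w k x ^ p ∂μ from lintegral_congr this,
    lintegral_iSup (fun k => (hwm k).pow_const _) hmono]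
  exact iSup_le key

lemma coarea (N : ℕ) (s : ℝ) (v : Rn N → ℝ) (hv : Measurable v) (h0 : ∀ x, 0 ≤ v x) :
    gagE N s v = ∫⁻ t in Set.Ioi (0:ℝ), gagE N s (fun x => if t < v x then (1:ℝ) else 0) := by
  unfold gagE
  have hm : Measurable (fun z : (Rn N × Rn N) × ℝ =>
    ENNReal.ofReal (|(if z.2 < v z.1.1 then (1:ℝ) else 0) - (if z.2 < v z.1.2 then (1:ℝ) else 0)| /
      dist z.1.1 z.1.2 ^ ((N : ℝ) + s))) := by
    have a1 : Measurable (fun z : (Rn N × Rn N) × ℝ => (if z.2 < v z.1.1 then (1:ℝ) else 0)) :=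
      Measurable.ite (measurableSet_lt measurable_snd (hv.comp (measurable_fst.comp measurable_fst)))
        measurable_const measurable_const
    have a2 : Measurable (fun z : (Rn N × Rn N) × ℝ => (if z.2 < v z.1.2 then (1:ℝ) else 0)) :=
      Measurable.ite (measurableSet_lt measurable_snd (hv.comp (measurable_snd.comp measurable_fst)))
        measurable_const measurable_const
    have a3 : Measurable (fun z : (Rn N × Rn N) × ℝ => dist z.1.1 z.1.2 ^ ((N : ℝ) + s)) :=
      Measurable.pow_const (Measurable.dist (measurable_fst.comp measurable_fst)
        (measurable_snd.comp measurable_fst)) _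
    exact ((_root_.continuous_abs.measurable.comp (a1.sub a2)).div a3).ennreal_ofReal
  calc _ = ∫⁻ x, ∫⁻ y, ∫⁻ t in Set.Ioi (0:ℝ), ENNReal.ofReal
        (|(if t < v x then (1:ℝ) else 0) - (if t < v y then (1:ℝ) else 0)| /
      dist x y ^ ((N : ℝ) + s)) := by
        refine lintegral_congr fun x => lintegral_congr fun y => ?_
        simp_rw [div_eq_mul_inv, ENNReal.ofReal_mul (abs_nonneg _)]
        rw [lintegral_mul_const' _ _ ENNReal.ofReal_ne_top, ← coarea_pt _ _ (h0 x) (h0 y)]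
    _ = ∫⁻ x, ∫⁻ t in Set.Ioi (0:ℝ), ∫⁻ y, ENNReal.ofReal
        (|(if t < v x then (1:ℝ) else 0) - (if t < v y then (1:ℝ) else 0)| /
      dist x y ^ ((N : ℝ) + s)) := by
        refine lintegral_congr fun x => ?_
        rw [lintegral_lintegral_swap]
        exact (hm.comp (f := fun z : Rn N × ℝ => ((x, z.1), z.2)) (by fun_prop)).aemeasurable
    _ = _ := by
        rw [lintegral_lintegral_swap]
        refine Measurable.aemeasurable ?_
        exact Measurable.lintegral_prod_right' (f := fun z : (Rn N × ℝ) × Rn N => ENNReal.ofReal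
        (|(if z.1.2 < v z.1.1 then (1:ℝ) else 0) - (if z.1.2 < v z.2 then (1:ℝ) else 0)| /
      dist z.1.1 z.2 ^ ((N : ℝ) + s))) (hm.comp (f := fun z : (Rn N × ℝ) × Rn N => ((z.1.1, z.2), z.1.2)) (by fun_prop))

lemma gagE_congr (N : ℕ) (s : ℝ) (u v : Rn N → ℝ) (h : u =ᵐ[volume] v) : gagE N s u = gagE N s v := by
  unfold gagE
  refine lintegral_congr_ae ?_
  filter_upwards [h] with x hx
  refine lintegral_congr_ae ?_
  filter_upwards [h] with y hy
  simp only [hx, hy]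

lemma gagE_abs (N : ℕ) (s : ℝ) (u : Rn N → ℝ) : gagE N s (fun x => |u x|) ≤ gagE N s u := by
  unfold gagE
  refine lintegral_mono fun x => lintegral_mono fun y => ENNReal.ofReal_le_ofReal ?_
  exact div_le_div_of_nonneg_right (abs_abs_sub_abs_le_abs_sub _ _) (by positivity)


lemma exists_set (N : ℕ) (s p l : ℝ) (hp : 1 < p) (hl : 0 < l) (u : Rn N → ℝ)
    (hu : memW N s u) (hnt : nontriv N u) (hr : gag N s u / Lq N p u < l) :
    ∃ E : Set (Rn N), MeasurableSet E ∧ volume E ≠ 0 ∧ volume E ≠ ⊤ ∧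
      gagE N s (E.indicator (fun _ => 1)) ≤ ENNReal.ofReal l * volume E ^ (1 / p) := by
  by_contra H
  push Not at H
  have hp0 : 0 < p := by linarith
  obtain ⟨hui, hug⟩ := hu
  set u' := hui.1.mk u with hu'
  have hu'm : Measurable u' := hui.1.stronglyMeasurable_mk.measurable
  have hae : u =ᵐ[volume] u' := hui.1.ae_eq_mk
  have hu'i : Integrable u' volume := hui.congr hae
  set v : Rn N → ℝ := fun x => |u' x| with hvdef
  have hvm : Measurable v := _root_.continuous_abs.measurable.comp hu'm
  have h0 : ∀ x, 0 ≤ v x := fun x => abs_nonneg _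
  have hvi : Integrable v volume := hu'i.abs
  have hvfin : ∫⁻ x, ENNReal.ofReal (v x) < ⊤ := by
    rw [← ofReal_integral_eq_lintegral_ofReal hvi (Filter.Eventually.of_forall h0)]
    exact ENNReal.ofReal_lt_top
  have hG : gagE N s v ≤ gagE N s u := by
    rw [gagE_congr N s u u' hae]
    exact gagE_abs N s u'
  set A := ∫⁻ t in Set.Ioi (0:ℝ), (volume {x | t < v x}) ^ (1 / p) with hA
  have hlA : ENNReal.ofReal l * A ≤ gagE N s u := by
    refine le_trans ?_ hG
    rw [coarea N s v hvm h0, hA, ← lintegral_const_mul' _ _ ENNReal.ofReal_ne_top]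
    refine setLIntegral_mono' measurableSet_Ioi fun t ht => ?_
    have hEm : MeasurableSet {x | t < v x} := measurableSet_lt measurable_const hvm
    by_cases hz : volume {x | t < v x} = 0
    · rw [hz, ENNReal.zero_rpow_of_pos (by positivity), mul_zero]
      exact zero_le
    have hfin : volume {x | t < v x} ≠ ⊤ := by
      have h1 := hvi.measure_ge_lt_top (ε := t) ht
      refine ne_top_of_le_ne_top h1.ne (measure_mono fun x hx => ?_)
      have hx' : t < v x := hx
      exact hx'.le
    have := (H _ hEm hz hfin).le
    refine this.trans (le_of_eq ?_)
    congr 1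
  have hAfin : A ≠ ⊤ := by
    intro h
    rw [h, ENNReal.mul_top (by simpa using hl)] at hlA
    exact absurd hug (not_lt.mpr hlA)
  have hM := mink volume v hvm h0 hvfin p hp
  rw [← hA] at hM
  set J := ∫⁻ x, ENNReal.ofReal (v x) ^ p with hJ
  have hJfin : J ≠ ⊤ := ne_top_of_le_ne_top (ENNReal.rpow_ne_top_of_nonneg hp0.le hAfin) hM
  have hJ0 : J ≠ 0 := by
    intro h
    rw [hJ, lintegral_eq_zero_iff (hvm.ennreal_ofReal.pow_const _)] at h
    apply hnt
    filter_upwards [h, hae] with x hx hx2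
    have h3 : ENNReal.ofReal (v x) = 0 := by
      simpa [ENNReal.rpow_eq_zero_iff, hp0, not_lt.mpr hp0.le] using hx
    have h4 : v x ≤ 0 := ENNReal.ofReal_eq_zero.mp h3
    rw [hx2]
    exact abs_eq_zero.mp (le_antisymm h4 (h0 x))
  have hLq : Lq N p u = J.toReal ^ (1 / p) := by
    unfold Lq
    congr 1
    rw [integral_eq_lintegral_of_nonneg_ae (f := fun x => |u x| ^ p) (Filter.Eventually.of_forall fun x => by positivity)
      (((_root_.continuous_abs.measurable.comp_aemeasurable hui.1.aemeasurable).pow_const p).aestronglyMeasurable)]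
    congr 1
    refine lintegral_congr_ae ?_
    filter_upwards [hae] with x hx
    rw [hx, ENNReal.ofReal_rpow_of_nonneg (h0 x) hp0.le]
  have hLpos : 0 < Lq N p u := by
    rw [hLq]
    exact Real.rpow_pos_of_pos (ENNReal.toReal_pos hJ0 hJfin) _
  have hLA : Lq N p u ≤ A.toReal := by
    rw [hLq, ENNReal.toReal_rpow]
    refine ENNReal.toReal_mono hAfin ?_
    calc J ^ (1 / p) ≤ (A ^ p) ^ (1 / p) := ENNReal.rpow_le_rpow hM (by positivity)
      _ = A := by rw [← ENNReal.rpow_mul, mul_one_div_cancel hp0.ne', ENNReal.rpow_one]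
  have h5 : l * A.toReal ≤ gag N s u := by
    have := ENNReal.toReal_mono hug.ne hlA
    rwa [ENNReal.toReal_mul, ENNReal.toReal_ofReal hl.le] at this
  rw [div_lt_iff₀ hLpos] at hr
  nlinarith

lemma lint_scale (N : ℕ) (R : ℝ) (hR : 0 < R) (f : Rn N → ℝ≥0∞) :
    ∫⁻ x, f (R⁻¹ • x) = ENNReal.ofReal (R ^ N) * ∫⁻ x, f x := by
  have hR' : R⁻¹ ≠ 0 := by positivity
  have h := (Homeomorph.smulOfNeZero R⁻¹ hR' : Rn N ≃ₜ Rn N).measurableEmbedding.lintegral_map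
    (μ := volume) f
  have h2 := Measure.map_addHaar_smul (volume : Measure (Rn N)) hR'
  have h3 : Measure.map (Homeomorph.smulOfNeZero R⁻¹ hR' : Rn N ≃ₜ Rn N) (volume : Measure (Rn N)) =
    ENNReal.ofReal (R ^ N) • volume := by
    refine Eq.trans h2 ?_
    rw [finrank_euclideanSpace_fin, inv_pow, inv_inv, abs_of_pos (by positivity)]
  rw [h3, lintegral_smul_measure] at h
  exact h.symm

lemma gagE_scale (N : ℕ) (s R : ℝ) (hR : 0 < R) (u : Rn N → ℝ) :
    gagE N s (fun x => u (R⁻¹ • x)) = ENNReal.ofReal (R ^ ((N:ℝ) - s)) * gagE N s u := by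
  unfold gagE
  have h1 : ∀ x y : Rn N, ENNReal.ofReal (|u (R⁻¹ • x) - u (R⁻¹ • y)| / dist x y ^ ((N : ℝ) + s))
      = ENNReal.ofReal (R ^ (-((N:ℝ) + s))) * (fun x y => ENNReal.ofReal (|u x - u y| /
        dist x y ^ ((N : ℝ) + s))) (R⁻¹ • x) (R⁻¹ • y) := by
    intro x y
    simp only
    rw [← ENNReal.ofReal_mul (by positivity), dist_smul₀, Real.norm_of_nonneg (by positivity),
      Real.mul_rpow (by positivity) dist_nonneg, Real.inv_rpow hR.le, Real.rpow_neg hR.le]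
    have : 0 < R ^ ((N:ℝ) + s) := by positivity
    congr 1
    by_cases hd : dist x y ^ ((N:ℝ)+s) = 0
    · simp [hd]
    · field_simp
  simp_rw [h1]
  simp_rw [lintegral_const_mul' _ _ ENNReal.ofReal_ne_top]
  have h2 : ∀ x : Rn N, ∫⁻ y, ENNReal.ofReal (|u (R⁻¹ • x) - u (R⁻¹ • y)| /
        dist (R⁻¹ • x) (R⁻¹ • y) ^ ((N : ℝ) + s)) = ENNReal.ofReal (R ^ N) *
        (fun x => ∫⁻ y, ENNReal.ofReal (|u x - u y| / dist x y ^ ((N : ℝ) + s))) (R⁻¹ • x) := by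
    intro x
    exact lint_scale N R hR (fun y => ENNReal.ofReal (|u (R⁻¹ • x) - u y| /
        dist (R⁻¹ • x) y ^ ((N : ℝ) + s)))
  simp_rw [h2]
  rw [lintegral_const_mul' _ _ ENNReal.ofReal_ne_top]
  rw [lint_scale N R hR (fun x => ∫⁻ y, ENNReal.ofReal (|u x - u y| / dist x y ^ ((N : ℝ) + s)))]
  rw [← mul_assoc, ← mul_assoc, ← ENNReal.ofReal_mul (by positivity),
    ← ENNReal.ofReal_mul (by positivity)]
  congr 2
  rw [← Real.rpow_natCast, ← Real.rpow_add hR, ← Real.rpow_add hR]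
  congr 1
  ring

lemma scale_set (N : ℕ) (hN : 1 ≤ N) (s l m : ℝ) (hs1 : s < 1) (hl : 0 < l) (hm : 0 < m)
    (E : Set (Rn N)) (hE : MeasurableSet E) (hE0 : volume E ≠ 0) (hEt : volume E ≠ ⊤)
    (hg : gagE N s (E.indicator (fun _ => 1)) ≤ ENNReal.ofReal l * volume E ^ (((N:ℝ) - s) / N)) :
    ∃ F : Set (Rn N), MeasurableSet F ∧ volume F = ENNReal.ofReal m ∧
      gagE N s (F.indicator (fun _ => 1)) ≤ ENNReal.ofReal (l * m ^ (((N:ℝ) - s) / N)) := by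
  have hN1 : (1:ℝ) ≤ N := by exact_mod_cast hN
  have hN0 : (0:ℝ) < N := by linarith
  set V := (volume E).toReal with hV
  have hVpos : 0 < V := ENNReal.toReal_pos hE0 hEt
  have hEV : volume E = ENNReal.ofReal V := (ENNReal.ofReal_toReal hEt).symm
  set R := (m / V) ^ (1 / (N:ℝ)) with hRdef
  have hR : 0 < R := by positivity
  have hRN : R ^ N = m / V := by
    rw [hRdef, ← Real.rpow_natCast, ← Real.rpow_mul (by positivity), one_div_mul_cancel hN0.ne',
      Real.rpow_one]
  have hF : MeasurableSet ((fun x : Rn N => R⁻¹ • x) ⁻¹' E) := (measurable_const_smul R⁻¹) hE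
  refine ⟨(fun x : Rn N => R⁻¹ • x) ⁻¹' E, hF, ?_, ?_⟩
  · have := lint_scale N R hR (E.indicator 1)
    rw [lintegral_indicator_one hE, hRN, hEV, ← ENNReal.ofReal_mul (by positivity),
      div_mul_cancel₀ _ hVpos.ne'] at this
    rw [← this, ← lintegral_indicator_one hF]
    rfl
  · have h1 := gagE_scale N s R hR (E.indicator (fun _ => 1))
    have h2 : (fun x : Rn N => E.indicator (fun _ => (1:ℝ)) (R⁻¹ • x)) =
      ((fun x : Rn N => R⁻¹ • x) ⁻¹' E).indicator (fun _ => 1) := rfl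
    rw [← h2, h1]
    refine (mul_le_mul_right hg _).trans (le_of_eq ?_)
    rw [hEV, ENNReal.ofReal_rpow_of_pos hVpos, ← ENNReal.ofReal_mul hl.le,
      ← ENNReal.ofReal_mul (by positivity)]
    congr 1
    have h3 : R ^ ((N:ℝ) - s) = (m / V) ^ (((N:ℝ) - s) / N) := by
      rw [hRdef, ← Real.rpow_mul (by positivity)]
      congr 1
      ring
    rw [h3, Real.div_rpow hm.le hVpos.le]
    have : 0 < V ^ (((N:ℝ) - s) / N) := by positivity
    field_simp

lemma quot_set (N : ℕ) (s q l m a : ℝ) (hq : 1 < q) (hl : 0 < l) (hm : 0 < m)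
    (F : Set (Rn N)) (hF : MeasurableSet F) (hV : volume F = ENNReal.ofReal m)
    (hg : gagE N s (F.indicator (fun _ => 1)) ≤ ENNReal.ofReal (l * m ^ a)) :
    SFull N s q ≤ (l * m ^ a + m) / m ^ (1 / q) := by
  have hreal : (volume : Measure (Rn N)).real F = m := by
    rw [Measure.real, hV, ENNReal.toReal_ofReal hm.le]
  have hint : ∫ x, F.indicator (fun _ => (1:ℝ)) x = m := by
    rw [integral_indicator_const _ hF, hreal]; simp
  have hle : (gag N s (F.indicator (fun _ => 1)) + ∫ x, |F.indicator (fun _ => (1:ℝ)) x|) /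
      Lq N q (F.indicator (fun _ => 1)) ≤ (l * m ^ a + m) / m ^ (1 / q) := by
    have e1 : (∫ x, |F.indicator (fun _ => (1:ℝ)) x|) = m := by
      rw [← hint]
      congr 1; ext x
      by_cases h : x ∈ F <;> simp [h]
    have e2 : Lq N q (F.indicator (fun _ => 1)) = m ^ (1 / q) := by
      unfold Lq
      rw [← hint]
      congr 2; ext x
      by_cases h : x ∈ F
      · simp [h]
      · simp [h, Real.zero_rpow (by linarith : q ≠ 0)]
    rw [e1, e2]
    have e3 : gag N s (F.indicator (fun _ => 1)) ≤ l * m ^ a :=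
      ENNReal.toReal_le_of_le_ofReal (by positivity) hg
    gcongr
  refine le_trans (csInf_le ⟨0, ?_⟩ ⟨F.indicator (fun _ => 1), ⟨?_, ?_⟩, ?_, rfl⟩) hle
  · rintro r ⟨u, -, -, rfl⟩
    unfold Lq gag
    have : 0 ≤ ∫ x, |u x| ^ q := integral_nonneg fun x => by positivity
    have : 0 ≤ ∫ x, |u x| := integral_nonneg fun x => by positivity
    positivity
  · exact (integrable_indicator_iff hF).mpr (integrableOn_const (by rw [hV]; exact ENNReal.ofReal_ne_top))
  · exact lt_of_le_of_lt hg ENNReal.ofReal_lt_top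
  · intro h
    have := integral_congr_ae h
    rw [hint] at this
    simp at this
    linarith

lemma optim (l al be k : ℝ) (hl : 0 < l) (ha : 0 < al) (hb : 0 < be) (hk : k * (al + be) = 1) (q a : ℝ)
    (h1 : 1 / q = a + al) (h2 : 1 - 1 / q = be) :
    (l * ((l * al / be) ^ k) ^ a + (l * al / be) ^ k) / ((l * al / be) ^ k) ^ (1 / q) =
      (al + be) * al ^ (k * (-al)) * be ^ (k * (-be)) * l ^ (k * be) := by
  set m := (l * al / be) ^ k with hm
  have hmpos : 0 < m := by positivity
  have hmm : m ^ (al + be) = l * al / be := by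
    rw [hm, ← Real.rpow_mul (by positivity), hk, Real.rpow_one]
  have e1 : (l * m ^ a + m) / m ^ (1 / q) = m ^ be * (l / m ^ (al + be) + 1) := by
    have : a = 1 / q - al := by linarith
    have t1 : m ^ a = m ^ (1/q) * m ^ be / m ^ (al + be) := by
      rw [← Real.rpow_add hmpos, ← Real.rpow_sub hmpos]; congr 1; linarith
    have t2 : m = m ^ (1/q) * m ^ be := by
      rw [← Real.rpow_add hmpos, ← h2, add_sub_cancel, Real.rpow_one]
    have p1 : 0 < m ^ (1/q) := by positivity
    have p2 : 0 < m ^ (al + be) := by positivity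
    have t3 : l * m ^ a + m = m ^ (1/q) * (m ^ be * (l / m ^ (al + be) + 1)) := by
      rw [t1]
      linear_combination t2
    rw [t3, mul_div_cancel_left₀ _ p1.ne']
  rw [e1, hmm]
  have e2 : m ^ be = l ^ (k * be) * al ^ (k * be) * be ^ (k * (-be)) := by
    rw [hm, ← Real.rpow_mul (by positivity), Real.div_rpow (by positivity) hb.le,
      Real.mul_rpow hl.le ha.le, mul_neg, Real.rpow_neg hb.le, div_eq_mul_inv]
  have e3 : al ^ (k * be) = al * al ^ (k * (-al)) := by
    nth_rewrite 2 [← Real.rpow_one al]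
    rw [← Real.rpow_add ha]; congr 1; linarith
  rw [e2, e3]
  field_simp
  ring

/-- the upper bound for `S_{s,q}(ℝ^N)`, `1 < q < 1*_s = N/(N-s)`. -/
theorem S_full_upper_bound (N : ℕ) (hN : 1 ≤ N) (s : ℝ) (hs0 : 0 < s) (hs1 : s < 1)
    (q : ℝ) (hq1 : 1 < q) (hq : q < (N : ℝ) / ((N : ℝ) - s)) :
    SFull N s q ≤
      (s / N) * (1 / q - ((N : ℝ) - s) / N) ^ ((N / s) * (((N : ℝ) - s) / N - 1 / q)) *
        (1 - 1 / q) ^ ((N / s) * (1 / q - 1)) *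
        Scrit N s ^ ((N / s) * (1 - 1 / q)) := by
  have hN1 : (1:ℝ) ≤ N := by exact_mod_cast hN
  have hN0 : (0:ℝ) < N := by linarith
  have hNs : 0 < (N:ℝ) - s := by linarith
  have hp : 1 < (N:ℝ) / ((N:ℝ) - s) := by linarith
  have hpinv : 1 / ((N:ℝ) / ((N:ℝ) - s)) = ((N:ℝ) - s) / N := one_div_div _ _
  have hbe : 0 < 1 - 1 / q := by
    rw [sub_pos, div_lt_one (by linarith)]; exact hq1
  have hal : 0 < 1 / q - ((N : ℝ) - s) / N := by
    rw [sub_pos, ← hpinv]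
    exact one_div_lt_one_div_of_lt (by linarith) hq
  have hsum : (1 / q - ((N : ℝ) - s) / N) + (1 - 1 / q) = s / N := by
    field_simp; ring
  have hkpos : 0 < (N / s) * (1 - 1 / q) := by positivity
  have hSc0 : 0 ≤ Scrit N s := by
    refine Real.sInf_nonneg ?_
    rintro r ⟨u, -, -, rfl⟩
    unfold Lq gag
    have : 0 ≤ ∫ x, |u x| ^ ((N:ℝ) / ((N:ℝ) - s)) := integral_nonneg fun x => by positivity
    positivity
  by_cases hne : ∃ u : Rn N → ℝ, memW N s u ∧ nontriv N u
  swap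
  · have : SFull N s q = 0 := by
      unfold SFull
      convert Real.sInf_empty
      ext r
      simp only [Set.mem_ofPred_eq, Set.mem_empty_iff_false, iff_false]
      rintro ⟨u, h1, h2, -⟩
      exact hne ⟨u, h1, h2⟩
    rw [this]
    positivity
  have main : ∀ l, Scrit N s < l → SFull N s q ≤
      (s / N) * (1 / q - ((N : ℝ) - s) / N) ^ ((N / s) * (((N : ℝ) - s) / N - 1 / q)) *
        (1 - 1 / q) ^ ((N / s) * (1 / q - 1)) * l ^ ((N / s) * (1 - 1 / q)) := by
    intro l hl
    have hl0 : 0 < l := lt_of_le_of_lt hSc0 hl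
    obtain ⟨u0, hu1, hu2⟩ := hne
    obtain ⟨r, ⟨u, hu, hnt, rfl⟩, hr⟩ :=
      exists_lt_of_csInf_lt (s := { r : ℝ | ∃ u : Rn N → ℝ, memW N s u ∧ nontriv N u ∧
      r = gag N s u / Lq N ((N : ℝ) / ((N : ℝ) - s)) u }) ⟨_, u0, hu1, hu2, rfl⟩ hl
    obtain ⟨E, hE, hE0, hEt, hg⟩ := exists_set N s _ l hp hl0 u hu hnt hr
    rw [hpinv] at hg
    set m := (l * (1 / q - ((N : ℝ) - s) / N) / (1 - 1 / q)) ^ ((N:ℝ) / s) with hm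
    have hm0 : 0 < m := by positivity
    obtain ⟨F, hF, hV, hgF⟩ := scale_set N hN s l m hs1 hl0 hm0 E hE hE0 hEt hg
    refine (quot_set N s q l m _ hq1 hl0 hm0 F hF hV hgF).trans (le_of_eq ?_)
    have := optim l (1 / q - ((N : ℝ) - s) / N) (1 - 1 / q) (N / s) hl0 hal hbe
      (by rw [hsum]; field_simp) q (((N : ℝ) - s) / N) (by ring) rfl
    rw [hm, this, hsum, neg_sub, neg_sub]
  have hcont : ContinuousAt (fun l : ℝ =>
      (s / N) * (1 / q - ((N : ℝ) - s) / N) ^ ((N / s) * (((N : ℝ) - s) / N - 1 / q)) *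
        (1 - 1 / q) ^ ((N / s) * (1 / q - 1)) * l ^ ((N / s) * (1 - 1 / q))) (Scrit N s) :=
    ContinuousAt.mul continuousAt_const (Real.continuousAt_rpow_const _ _ (Or.inr hkpos.le))
  refine ge_of_tendsto (hcont.tendsto.mono_left (nhdsWithin_le_nhds (s := Set.Ioi (Scrit N s)))) ?_
  filter_upwards [self_mem_nhdsWithin] with l hl
  exact main l hl
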